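/- arXiv:2311.10670 — 6 statements merged into one kernel-verified Lean document; each statement's English description precedes it below -/
import Mathlib

section
/- Let X be a bounded real-valued random variable on a probability space (Ω, F, P) that is not P-almost surely constant. Then the map α ↦ C_α(X) = α · log E_P[exp(X/α)] is strictly decreasing on (0, ∞): for all 0 < α₁ < α₂ one has C_{α₂}(X) < C_{α₁}(X). -/
open MeasureTheory Real

/-- For a bounded real-valued random variable `X` on a probability space `(Ω, F, P)` that is not
`P`-almost surely constant, the map `α ↦ C_α(X) = α * log (E_P[exp (X/α)])` is strictly
decreasing on `(0, ∞)`. -/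
theorem certainty_equivalent_strictAnti
    {Ω : Type*} [MeasurableSpace Ω] (P : Measure Ω) [IsProbabilityMeasure P]
    (X : Ω → ℝ) (hX : Measurable X) (C : ℝ) (hC : ∀ ω, |X ω| ≤ C)
    (hnc : ¬ ∃ c : ℝ, ∀ᵐ ω ∂P, X ω = c) :
    ∀ α₁ α₂ : ℝ, 0 < α₁ → α₁ < α₂ →
      α₂ * Real.log (∫ ω, Real.exp (X ω / α₂) ∂P) <
        α₁ * Real.log (∫ ω, Real.exp (X ω / α₁) ∂P) := by
  intro a b ha hab
  have hb : 0 < b := ha.trans hab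
  have hint : ∀ t : ℝ, 0 < t → Integrable (fun ω => Real.exp (X ω / t)) P := by
    intro t ht
    refine Integrable.of_bound (C := Real.exp (C / t))
      (Real.measurable_exp.comp (hX.div_const t)).aestronglyMeasurable ?_
    refine Filter.Eventually.of_forall fun ω => ?_
    rw [Real.norm_eq_abs, abs_of_pos (Real.exp_pos _), Real.exp_le_exp]
    exact div_le_div_of_nonneg_right ((le_abs_self _).trans (hC ω)) ht.le
  have hp : 1 < b / a := (one_lt_div ha).2 hab
  have hpow : ∀ ω, Real.exp (X ω / b) ^ (b / a) = Real.exp (X ω / a) := by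
    intro ω
    rw [← Real.exp_mul]
    congr 1
    field_simp
  have key := (strictConvexOn_rpow hp).ae_eq_const_or_map_average_lt (μ := P)
    (f := fun ω => Real.exp (X ω / b))
    (Real.continuous_rpow_const (by positivity)).continuousOn isClosed_Ici
    (Filter.Eventually.of_forall fun ω => (Real.exp_pos _).le) (hint b hb)
    ((hint a ha).congr (Filter.Eventually.of_forall fun ω => (hpow ω).symm))
  simp only [average_eq_integral, hpow] at key
  have hpos : 0 < ∫ ω, Real.exp (X ω / b) ∂P := integral_exp_pos (hint b hb)
  rcases key with h | h
  · exfalso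
    apply hnc
    refine ⟨b * Real.log (∫ ω, Real.exp (X ω / b) ∂P), ?_⟩
    filter_upwards [h] with ω hω
    simp only [Function.const_apply] at hω
    rw [← hω, Real.log_exp]
    field_simp
  · have h2 := Real.log_lt_log (Real.rpow_pos_of_pos hpos _) h
    rw [Real.log_rpow hpos] at h2
    have h3 := mul_lt_mul_of_pos_left h2 ha
    rwa [← mul_assoc, mul_div_cancel₀ _ ha.ne'] at h3
end

section
/- Let X₁ and X₂ be bounded real-valued random variables on a common probability space (Ω, F, P), let α₁, α₂ > 0, and let λ ∈ [0, 1]. Set β = λα₁ + (1−λ)α₂. Then the certainty equivalent C_α(X) = α · log E_P[exp(X/α)] satisfies the joint convexity inequality C_β(λX₁ + (1−λ)X₂) ≤ λ·C_{α₁}(X₁) + (1−λ)·C_{α₂}(X₂). -/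
open MeasureTheory Real

/-- The exponential of a bounded measurable function is integrable. -/
lemma integrable_exp_of_bdd {Ω : Type*} [MeasurableSpace Ω] (P : Measure Ω)
    [IsProbabilityMeasure P] (Y : Ω → ℝ) (hY : Measurable Y) (C : ℝ) (hC : ∀ ω, |Y ω| ≤ C) :
    Integrable (fun ω => Real.exp (Y ω)) P := by
  refine Integrable.of_bound (C := Real.exp C) hY.exp.aestronglyMeasurable ?_
  refine Filter.Eventually.of_forall fun ω => ?_
  rw [Real.norm_of_nonneg (Real.exp_nonneg _)]
  exact Real.exp_le_exp.2 ((le_abs_self _).trans (hC ω))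

/-- Joint convexity of the certainty equivalent `C_α(X) = α * log (E_P[exp (X/α)])`:
for bounded random variables `X₁, X₂` on a common probability space, `α₁, α₂ > 0` and
`λ ∈ [0,1]`, with `β = λ·α₁ + (1−λ)·α₂`, one has
`C_β(λ·X₁ + (1−λ)·X₂) ≤ λ·C_{α₁}(X₁) + (1−λ)·C_{α₂}(X₂)`. -/
theorem certainty_equivalent_jointly_convex
    {Ω : Type*} [MeasurableSpace Ω] (P : Measure Ω) [IsProbabilityMeasure P]
    (X₁ X₂ : Ω → ℝ) (hX₁ : Measurable X₁) (hX₂ : Measurable X₂)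
    (C₁ C₂ : ℝ) (hC₁ : ∀ ω, |X₁ ω| ≤ C₁) (hC₂ : ∀ ω, |X₂ ω| ≤ C₂)
    (α₁ α₂ : ℝ) (hα₁ : 0 < α₁) (hα₂ : 0 < α₂)
    (l : ℝ) (hl₀ : 0 ≤ l) (hl₁ : l ≤ 1)
    (β : ℝ) (hβ : β = l * α₁ + (1 - l) * α₂) :
    β * Real.log (∫ ω, Real.exp ((l * X₁ ω + (1 - l) * X₂ ω) / β) ∂P) ≤
      l * (α₁ * Real.log (∫ ω, Real.exp (X₁ ω / α₁) ∂P)) +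
        (1 - l) * (α₂ * Real.log (∫ ω, Real.exp (X₂ ω / α₂) ∂P)) := by
  have hβ0 : 0 < β := by
    rw [hβ]
    rcases hl₀.eq_or_lt with h | h
    · rw [← h]; simpa using hα₂
    · have := mul_pos h hα₁
      have := mul_nonneg (sub_nonneg.2 hl₁) hα₂.le
      linarith
  have hi₁ : Integrable (fun ω => Real.exp (X₁ ω / α₁)) P := by
    refine integrable_exp_of_bdd P _ (hX₁.div_const _) (C₁ / α₁) fun ω => ?_
    rw [abs_div, abs_of_pos hα₁]
    exact div_le_div_of_nonneg_right (hC₁ ω) hα₁.le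
  have hi₂ : Integrable (fun ω => Real.exp (X₂ ω / α₂)) P := by
    refine integrable_exp_of_bdd P _ (hX₂.div_const _) (C₂ / α₂) fun ω => ?_
    rw [abs_div, abs_of_pos hα₂]
    exact div_le_div_of_nonneg_right (hC₂ ω) hα₂.le
  have hi : Integrable (fun ω => Real.exp ((l * X₁ ω + (1 - l) * X₂ ω) / β)) P := by
    refine integrable_exp_of_bdd P _
      (((hX₁.const_mul l).add (hX₂.const_mul (1 - l))).div_const _)
      ((l * C₁ + (1 - l) * C₂) / β) fun ω => ?_
    rw [abs_div, abs_of_pos hβ0]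
    refine div_le_div_of_nonneg_right ((abs_add_le _ _).trans ?_) hβ0.le
    rw [abs_mul, abs_mul, abs_of_nonneg hl₀, abs_of_nonneg (sub_nonneg.2 hl₁)]
    exact add_le_add (mul_le_mul_of_nonneg_left (hC₁ ω) hl₀)
      (mul_le_mul_of_nonneg_left (hC₂ ω) (sub_nonneg.2 hl₁))
  have hp₁ := integral_exp_pos hi₁
  have hp₂ := integral_exp_pos hi₂
  have hp := integral_exp_pos hi
  set I₁ := ∫ ω, Real.exp (X₁ ω / α₁) ∂P with hI₁
  set I₂ := ∫ ω, Real.exp (X₂ ω / α₂) ∂P with hI₂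
  set w := l * α₁ / β with hw
  set v := (1 - l) * α₂ / β with hv
  have hw0 : 0 ≤ w := div_nonneg (mul_nonneg hl₀ hα₁.le) hβ0.le
  have hv0 : 0 ≤ v := div_nonneg (mul_nonneg (sub_nonneg.2 hl₁) hα₂.le) hβ0.le
  have hwv : w + v = 1 := by
    rw [hw, hv, ← add_div, ← hβ, div_self hβ0.ne']
  set M := w * Real.log I₁ + v * Real.log I₂ with hM
  have key : ∀ ω, Real.exp ((l * X₁ ω + (1 - l) * X₂ ω) / β) ≤
      Real.exp M * (w * (Real.exp (X₁ ω / α₁) / I₁) + v * (Real.exp (X₂ ω / α₂) / I₂)) := by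
    intro ω
    have h := convexOn_exp.2 (Set.mem_univ (X₁ ω / α₁ - Real.log I₁))
      (Set.mem_univ (X₂ ω / α₂ - Real.log I₂)) hw0 hv0 hwv
    simp only [smul_eq_mul] at h
    rw [Real.exp_sub (X₁ ω / α₁), Real.exp_sub (X₂ ω / α₂), Real.exp_log hp₁,
      Real.exp_log hp₂] at h
    have e : (l * X₁ ω + (1 - l) * X₂ ω) / β =
        M + (w * (X₁ ω / α₁ - Real.log I₁) + v * (X₂ ω / α₂ - Real.log I₂)) := by
      have e₁ : w * (X₁ ω / α₁) = l * X₁ ω / β := by rw [hw]; field_simp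
      have e₂ : v * (X₂ ω / α₂) = (1 - l) * X₂ ω / β := by rw [hv]; field_simp
      rw [hM, mul_sub, mul_sub, e₁, e₂]
      ring
    rw [e, Real.exp_add]
    exact mul_le_mul_of_nonneg_left h (Real.exp_nonneg _)
  have hj₁ : Integrable (fun ω => w * (Real.exp (X₁ ω / α₁) / I₁)) P :=
    (hi₁.div_const _).const_mul _
  have hj₂ : Integrable (fun ω => v * (Real.exp (X₂ ω / α₂) / I₂)) P :=
    (hi₂.div_const _).const_mul _
  have hle := integral_mono hi ((hj₁.add hj₂).const_mul (Real.exp M)) key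
  have heq : ∫ ω, Real.exp M * (w * (Real.exp (X₁ ω / α₁) / I₁) +
      v * (Real.exp (X₂ ω / α₂) / I₂)) ∂P = Real.exp M := by
    rw [integral_const_mul, integral_add hj₁ hj₂, integral_const_mul, integral_const_mul,
      integral_div, integral_div, ← hI₁, ← hI₂, div_self hp₁.ne', div_self hp₂.ne',
      mul_one, mul_one, hwv, mul_one]
  have hlog : Real.log (∫ ω, Real.exp ((l * X₁ ω + (1 - l) * X₂ ω) / β) ∂P) ≤ M := by
    rw [Real.log_le_iff_le_exp hp]
    exact hle.trans heq.le
  refine (mul_le_mul_of_nonneg_left hlog hβ0.le).trans (le_of_eq ?_)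
  have e₁ : β * w = l * α₁ := by rw [hw]; field_simp
  have e₂ : β * v = (1 - l) * α₂ := by rw [hv]; field_simp
  rw [hM, mul_add, ← mul_assoc, ← mul_assoc, e₁, e₂]
  ring
end

section
/- Let a < b be real numbers and let m ∈ [a, b]. Define the two-point measure P₀ = ((b − m)/(b − a))·δ_a + ((m − a)/(b − a))·δ_b, where δ_x denotes the Dirac measure at x. Then P₀ is a probability measure on ℝ with P₀([a, b]) = 1, mean ∫ x dP₀(x) = m, and for every λ ∈ ℝ, ∫ exp(λx) dP₀(x) = ((b − m)·exp(λa) + (m − a)·exp(λb)) / (b − a). Consequently the supremum of ∫ exp(λx) dP(x) over all probability measures P supported on [a, b] with mean m equals ((b − m)·exp(λa) + (m − a)·exp(λb)) / (b − a). -/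
open MeasureTheory Real

/-- Let `a < b` and `m ∈ [a, b]`. The two-point measure
`P₀ = ((b − m)/(b − a))·δ_a + ((m − a)/(b − a))·δ_b` is a probability measure supported on
`[a, b]` with mean `m`, whose exponential moment `∫ exp (λ x) dP₀(x)` equals
`((b − m)·exp (λ a) + (m − a)·exp (λ b)) / (b − a)`; consequently this value is the supremum
(indeed the greatest value) of `∫ exp (λ x) dP(x)` over all probability measures `P`
supported on `[a, b]` with mean `m`. -/
theorem two_point_measure_achieves_sup_exp_moment
    (a b m : ℝ) (hab : a < b) (hma : a ≤ m) (hmb : m ≤ b) :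
    let P₀ : Measure ℝ :=
      ENNReal.ofReal ((b - m) / (b - a)) • Measure.dirac a +
        ENNReal.ofReal ((m - a) / (b - a)) • Measure.dirac b
    IsProbabilityMeasure P₀ ∧
    P₀ (Set.Icc a b) = 1 ∧
    (∫ x, x ∂P₀) = m ∧
    (∀ l : ℝ,
      (∫ x, Real.exp (l * x) ∂P₀) =
        ((b - m) * Real.exp (l * a) + (m - a) * Real.exp (l * b)) / (b - a)) ∧
    (∀ l : ℝ,
      IsGreatest
        {r : ℝ | ∃ P : Measure ℝ, IsProbabilityMeasure P ∧ P (Set.Icc a b) = 1 ∧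
          (∫ x, x ∂P) = m ∧ r = ∫ x, Real.exp (l * x) ∂P}
        (((b - m) * Real.exp (l * a) + (m - a) * Real.exp (l * b)) / (b - a))) := by
  intro P₀
  have hd : 0 < b - a := by linarith
  have h1 : 0 ≤ (b - m) / (b - a) := div_nonneg (by linarith) hd.le
  have h2 : 0 ≤ (m - a) / (b - a) := div_nonneg (by linarith) hd.le
  have hs : ENNReal.ofReal ((b - m) / (b - a)) + ENNReal.ofReal ((m - a) / (b - a)) = 1 := by
    rw [← ENNReal.ofReal_add h1 h2, ← ENNReal.ofReal_one]
    congr 1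
    field_simp
    ring
  have hint : ∀ f : ℝ → ℝ,
      (∫ x, f x ∂P₀) = (b - m) / (b - a) * f a + (m - a) / (b - a) * f b := by
    intro f
    have hi : ∀ (c x : ℝ), Integrable f (ENNReal.ofReal c • Measure.dirac x) := by
      intro c x
      exact (integrable_dirac (by simp)).smul_measure ENNReal.ofReal_ne_top
    simp only [P₀]
    rw [integral_add_measure (hi _ _) (hi _ _), integral_smul_measure, integral_smul_measure,
      integral_dirac, integral_dirac, ENNReal.toReal_ofReal h1, ENNReal.toReal_ofReal h2]
    simp
  have c1 : IsProbabilityMeasure P₀ := ⟨by simp [P₀, hs]⟩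
  have c2 : P₀ (Set.Icc a b) = 1 := by
    simp [P₀, hab.le, hs]
  have c3 : (∫ x, x ∂P₀) = m := by
    rw [hint (fun x => x)]
    field_simp
    ring
  have c4 : ∀ l : ℝ, (∫ x, Real.exp (l * x) ∂P₀) =
        ((b - m) * Real.exp (l * a) + (m - a) * Real.exp (l * b)) / (b - a) := by
    intro l
    rw [hint (fun x => Real.exp (l * x))]
    ring
  refine ⟨c1, c2, c3, c4, fun l => ⟨⟨P₀, c1, c2, c3, (c4 l).symm⟩, ?_⟩⟩
  rintro r ⟨P, hP, hI, hm, rfl⟩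
  have hae : ∀ᵐ x ∂P, x ∈ Set.Icc a b := by
    rw [← prob_compl_eq_zero_iff measurableSet_Icc] at hI
    exact hI
  have hx : Integrable (fun x : ℝ => x) P := Integrable.of_mem_Icc a b aemeasurable_id hae
  have hb : ∀ᵐ x ∂P, Real.exp (l * x) ≤
      ((b - x) * Real.exp (l * a) + (x - a) * Real.exp (l * b)) / (b - a) := by
    filter_upwards [hae] with x hx
    have := convexOn_exp.2 (Set.mem_univ (l * a)) (Set.mem_univ (l * b))
      (div_nonneg (sub_nonneg.2 hx.2) hd.le) (div_nonneg (sub_nonneg.2 hx.1) hd.le)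
      (by field_simp; ring)
    simp only [smul_eq_mul] at this
    have e : (b - x) / (b - a) * (l * a) + (x - a) / (b - a) * (l * b) = l * x := by
      field_simp
      ring
    rw [e] at this
    refine this.trans (le_of_eq ?_)
    ring
  have i1 : Integrable (fun x : ℝ => (b - x) * Real.exp (l * a)) P :=
    ((integrable_const b).sub hx).mul_const _
  have i2 : Integrable (fun x : ℝ => (x - a) * Real.exp (l * b)) P :=
    (hx.sub (integrable_const a)).mul_const _
  have hg : Integrable (fun x : ℝ =>
      ((b - x) * Real.exp (l * a) + (x - a) * Real.exp (l * b)) / (b - a)) P :=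
    (i1.add i2).div_const _
  refine (integral_mono_of_nonneg (Filter.Eventually.of_forall fun x => (Real.exp_pos _).le)
    hg hb).trans (le_of_eq ?_)
  rw [integral_div, integral_add i1 i2, integral_mul_const, integral_mul_const,
    integral_sub (integrable_const b) hx, integral_sub hx (integrable_const a), hm]
  simp
end

section
/- Let μ ∈ (−1, 1) and 0 ≤ δ ≤ 1 − μ². Let P be a Borel probability measure on ℝ with P([−1, 1]) = 1, mean ∫ z dP(z) = μ, and mean absolute deviation ∫ |z − μ| dP(z) ≤ δ. Then for every λ ∈ ℝ, ∫ exp(λz) dP(z) ≤ (δ/(2(1 + μ)))·exp(−λ) + (δ/(2(1 − μ)))·exp(λ) + (1 − δ/(2(1 + μ)) − δ/(2(1 − μ)))·exp(μλ). -/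
open MeasureTheory Real

theorem aux_chord (x y u v t : ℝ) (ht0 : 0 ≤ t) (ht1 : t ≤ 1) (hu : u = (1 - t) * x + t * y)
    (hv : v = (1 - t) * Real.exp x + t * Real.exp y) : Real.exp u ≤ v := by
  have := convexOn_exp.2 (Set.mem_univ x) (Set.mem_univ y) (sub_nonneg.2 ht1) ht0 (by ring)
  simp only [smul_eq_mul] at this
  rw [hu, hv]; exact this

/-- Worst-case exponential moment bound for the ambiguity set `F₂` of distributions supported on
`[−1, 1]` with mean `μ` and mean absolute deviation at most `δ`: for every such `P` and every
`λ ∈ ℝ`,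
`∫ exp (λ z) dP(z) ≤ (δ/(2(1+μ)))·e^{−λ} + (δ/(2(1−μ)))·e^{λ} + (1 − δ/(2(1+μ)) − δ/(2(1−μ)))·e^{μλ}`. -/
theorem exp_moment_le_mad_bound
    (μ δ : ℝ) (hμ₁ : -1 < μ) (hμ₂ : μ < 1) (hδ₀ : 0 ≤ δ) (hδ : δ ≤ 1 - μ ^ 2)
    (P : Measure ℝ) [IsProbabilityMeasure P]
    (hsupp : P (Set.Icc (-1 : ℝ) 1) = 1)
    (hmean : (∫ z, z ∂P) = μ)
    (hmad : (∫ z, |z - μ| ∂P) ≤ δ) :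
    ∀ l : ℝ,
      (∫ z, Real.exp (l * z) ∂P) ≤
        (δ / (2 * (1 + μ))) * Real.exp (-l) + (δ / (2 * (1 - μ))) * Real.exp l +
          (1 - δ / (2 * (1 + μ)) - δ / (2 * (1 - μ))) * Real.exp (μ * l) := by
  intro l
  have h1 : 0 < 1 + μ := by linarith
  have h2 : 0 < 1 - μ := by linarith
  obtain ⟨E, hE⟩ : ∃ E, E = Real.exp (μ * l) := ⟨_, rfl⟩
  obtain ⟨p, hp⟩ : ∃ p, p = (Real.exp l - E) / (1 - μ) := ⟨_, rfl⟩
  obtain ⟨m, hm⟩ : ∃ m, m = (E - Real.exp (-l)) / (1 + μ) := ⟨_, rfl⟩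
  have hp' : Real.exp l = E + p * (1 - μ) := by rw [hp]; field_simp; ring
  have hm' : Real.exp (-l) = E - m * (1 + μ) := by rw [hm]; field_simp; ring
  have hB : 0 ≤ (p - m) / 2 := by
    have h := aux_chord (-l) l (μ * l) _ ((1 + μ) / 2) (by linarith) (by linarith) (by ring) rfl
    rw [hp', hm', ← hE] at h
    have h3 : 0 ≤ (p - m) * ((1 + μ) * (1 - μ)) := by nlinarith
    have := nonneg_of_mul_nonneg_left h3 (mul_pos h1 h2)
    linarith
  have hae : ∀ᵐ z ∂P, z ∈ Set.Icc (-1 : ℝ) 1 :=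
    (mem_ae_iff_prob_eq_one measurableSet_Icc).2 hsupp
  have hpt : ∀ z ∈ Set.Icc (-1 : ℝ) 1,
      Real.exp (l * z) ≤ E + (p + m) / 2 * (z - μ) + (p - m) / 2 * |z - μ| := by
    rintro z ⟨hz1, hz2⟩
    rcases le_total μ z with h | h
    · rw [abs_of_nonneg (by linarith)]
      refine aux_chord (μ * l) l _ _ ((z - μ) / (1 - μ)) (div_nonneg (by linarith) h2.le)
        ((div_le_one h2).2 (by linarith)) (by field_simp; ring) ?_
      rw [← hE, hp']; field_simp; ring
    · rw [abs_of_nonpos (by linarith)]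
      refine aux_chord (μ * l) (-l) _ _ ((μ - z) / (1 + μ)) (div_nonneg (by linarith) h1.le)
        ((div_le_one h1).2 (by linarith)) (by field_simp; ring) ?_
      rw [← hE, hm']; field_simp; ring
  have hint : ∀ f : ℝ → ℝ, Continuous f → Integrable f P := by
    intro f hf
    obtain ⟨C, hC⟩ := (isCompact_Icc (a := (-1 : ℝ)) (b := 1)).exists_bound_of_continuousOn
      hf.continuousOn
    exact Integrable.of_bound hf.aestronglyMeasurable C (hae.mono fun z hz => hC z hz)
  have hle := integral_mono_ae (hint (fun z => Real.exp (l * z)) (by fun_prop))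
    (hint (fun z => E + (p + m) / 2 * (z - μ) + (p - m) / 2 * |z - μ|) (by fun_prop))
    (hae.mono hpt)
  have hval : ∫ z, (E + (p + m) / 2 * (z - μ) + (p - m) / 2 * |z - μ|) ∂P
      = E + (p - m) / 2 * ∫ z, |z - μ| ∂P := by
    rw [integral_add (hint (fun z => E + (p + m) / 2 * (z - μ)) (by fun_prop))
      (hint (fun z => (p - m) / 2 * |z - μ|) (by fun_prop)),
      integral_add (hint (fun z => E) (by fun_prop))
      (hint (fun z => (p + m) / 2 * (z - μ)) (by fun_prop)), integral_const_mul,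
      integral_const_mul, integral_sub (hint (fun z => z) (by fun_prop))
      (hint (fun z => μ) (by fun_prop)), hmean]
    simp
  have hfin : (δ / (2 * (1 + μ))) * Real.exp (-l) + (δ / (2 * (1 - μ))) * Real.exp l +
          (1 - δ / (2 * (1 + μ)) - δ / (2 * (1 - μ))) * Real.exp (μ * l)
      = E + (p - m) / 2 * δ := by
    rw [hp', hm', ← hE]; field_simp; ring
  rw [hfin]
  rw [hval] at hle
  exact hle.trans (by gcongr)
end

section
/- Let X be a bounded real-valued random variable on a probability space (Ω, F, P) and let τ ∈ ℝ. Then P(X ≤ τ) = 1 if and only if for every α > 0 one has α · log E_P[exp(X/α)] ≤ τ. (Equivalently, the Requirements Violation index ρ_τ(X) = inf { α > 0 : C_α(X) ≤ τ } equals 0 exactly when the target τ is met almost surely.) -/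
open MeasureTheory Real

/-- Full satisfaction: for a bounded random variable `X` on a probability space `(Ω, F, P)` and a
target `τ`, one has `P(X ≤ τ) = 1` if and only if `C_α(X) = α * log E_P[exp (X/α)] ≤ τ` for every
`α > 0` (i.e. the Requirements Violation index `ρ_τ(X)` equals `0` exactly when the target is met
almost surely). -/
theorem rv_index_full_satisfaction
    {Ω : Type*} [MeasurableSpace Ω] (P : Measure Ω) [IsProbabilityMeasure P]
    (X : Ω → ℝ) (hX : Measurable X) (C : ℝ) (hC : ∀ ω, |X ω| ≤ C) (τ : ℝ) :
    P {ω | X ω ≤ τ} = 1 ↔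
      ∀ α : ℝ, 0 < α → α * Real.log (∫ ω, Real.exp (X ω / α) ∂P) ≤ τ := by
  have hint : ∀ α : ℝ, 0 < α → Integrable (fun ω => Real.exp (X ω / α)) P := by
    intro α hα
    refine Integrable.of_bound (C := Real.exp (C / α)) ?_ ?_
    · exact (Real.measurable_exp.comp (hX.div_const α)).aestronglyMeasurable
    · refine Filter.Eventually.of_forall fun ω => ?_
      rw [Real.norm_eq_abs, abs_of_pos (Real.exp_pos _), Real.exp_le_exp]
      have := (abs_le.mp (hC ω)).2
      gcongr
  have hpos : ∀ α : ℝ, 0 < α → 0 < ∫ ω, Real.exp (X ω / α) ∂P :=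
    fun α hα => integral_exp_pos (hint α hα)
  have hiff : ∀ α : ℝ, 0 < α → (α * Real.log (∫ ω, Real.exp (X ω / α) ∂P) ≤ τ ↔
      ∫ ω, Real.exp (X ω / α) ∂P ≤ Real.exp (τ / α)) := by
    intro α hα
    rw [← Real.log_le_iff_le_exp (hpos α hα), le_div_iff₀ hα, mul_comm]
  have hae : P {ω | X ω ≤ τ} = 1 ↔ ∀ᵐ ω ∂P, X ω ≤ τ :=
    (mem_ae_iff_prob_eq_one (measurableSet_le hX measurable_const)).symm
  rw [hae]
  constructor
  · intro h α hα
    rw [hiff α hα]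
    calc ∫ ω, Real.exp (X ω / α) ∂P ≤ ∫ _, Real.exp (τ / α) ∂P := by
          refine integral_mono_ae (hint α hα) (integrable_const _) ?_
          filter_upwards [h] with ω hω
          rw [Real.exp_le_exp]
          gcongr
      _ = Real.exp (τ / α) := by simp
  · intro h
    have key : ∀ ε : ℝ, 0 < ε → ∀ᵐ ω ∂P, X ω < τ + ε := by
      intro ε hε
      have hz : P.real {ω | τ + ε ≤ X ω} = 0 := by
        by_contra hne
        have hp : 0 < P.real {ω | τ + ε ≤ X ω} := lt_of_le_of_ne measureReal_nonneg (Ne.symm hne)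
        set p := P.real {ω | τ + ε ≤ X ω} with hpdef
        have hα : 0 < p * ε / 2 := by positivity
        have h1 := (hiff _ hα).1 (h _ hα)
        have h2 := mul_meas_ge_le_integral_of_nonneg (μ := P)
          (Filter.Eventually.of_forall fun ω => (Real.exp_pos (X ω / (p * ε / 2))).le)
          (hint _ hα) (Real.exp ((τ + ε) / (p * ε / 2)))
        have hset : {ω | Real.exp ((τ + ε) / (p * ε / 2)) ≤ Real.exp (X ω / (p * ε / 2))}
            = {ω | τ + ε ≤ X ω} := by
          ext ω
          simp only [Set.mem_setOf_eq, Real.exp_le_exp]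
          exact div_le_div_iff_of_pos_right hα
        rw [hset, ← hpdef, add_div, Real.exp_add] at h2
        have h3 : ε / (p * ε / 2) = 2 / p := by field_simp
        have h4 := Real.add_one_le_exp (2 / p)
        have h5 : Real.exp (2 / p) * p ≤ 1 := by
          have := h2.trans h1
          rw [h3, mul_assoc] at this
          exact (mul_le_iff_le_one_right (Real.exp_pos _)).1 this
        have h6 : (2 / p + 1) * p = 2 + p := by field_simp
        nlinarith
      rw [measureReal_eq_zero_iff] at hz
      rw [ae_iff]
      simpa using hz
    have h' : ∀ᵐ ω ∂P, ∀ n : ℕ, X ω < τ + 1 / ((n : ℝ) + 1) :=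
      ae_all_iff.2 fun n => key _ (by positivity)
    filter_upwards [h'] with ω hω
    by_contra hlt
    obtain ⟨n, hn⟩ := exists_nat_one_div_lt (sub_pos.2 (not_le.1 hlt))
    linarith [hω n]
end

section
/- Let Y be a nonempty set, τ ∈ ℝ, and g : ℝ × Y → ℝ such that for each y ∈ Y the map α ↦ g(α, y) is strictly decreasing on [0, ∞). Let f : Y → [0, ∞) satisfy g(f(y), y) = τ for every y ∈ Y. Suppose s ∈ Y satisfies g(f(s), s) ≤ g(f(s), y) for all y ∈ Y (i.e., s minimizes y ↦ g(f(s), y) over Y). Then f(s) ≤ f(y) for all y ∈ Y; that is, a fixed point of the Repeated-Prim iteration is a global minimizer of f over Y. -/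
/-- A fixed point of the Repeated-Prim iteration is a global minimizer: let `Y` be nonempty,
`g : ℝ × Y → ℝ` with `α ↦ g (α, y)` strictly decreasing on `[0, ∞)` for each `y`, and
`f : Y → [0, ∞)` with `g (f y, y) = τ` for every `y`. If `s` minimizes `y ↦ g (f s, y)` over
`Y`, then `f s ≤ f y` for all `y ∈ Y`. -/
theorem repeated_prim_fixed_point_optimal
    {Y : Type*} [Nonempty Y] (g : ℝ → Y → ℝ) (τ : ℝ)
    (hstrict : ∀ y : Y, StrictAntiOn (fun α => g α y) (Set.Ici 0))
    (f : Y → ℝ) (hf0 : ∀ y, 0 ≤ f y) (hfτ : ∀ y, g (f y) y = τ)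
    (s : Y) (hmin : ∀ y : Y, g (f s) s ≤ g (f s) y) :
    ∀ y : Y, f s ≤ f y := by
  intro y
  by_contra hlt
  have h : g (f s) y < g (f y) y := hstrict y (hf0 y) (hf0 s) (not_le.mp hlt)
  have h1 := hmin y
  rw [hfτ s] at h1
  rw [hfτ y] at h
  exact absurd h (not_lt.mpr h1)
end
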